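/- Let μ, ν be Borel probability measures on ℝ^{d_x} and ℝ^{d_y} with finite fourth moments that are centered, i.e., ∫ x dμ(x) = 0 and ∫ y dν(y) = 0. Then for every ε ≥ 0, the entropic Gromov–Wasserstein cost decomposes as S_ε(μ,ν) = S¹(μ,ν) + S²_ε(μ,ν). In particular, for ε = 0, D(μ,ν)² = S¹(μ,ν) + S²(μ,ν). -/

import Mathlib

/-!
For a fixed coupling `π` of centered marginals, expand the square in the distortion cost:
the two pure terms depend only on the marginals, and in the cross term
`‖x - x'‖² ‖y - y'‖²` one writes `‖x - x'‖² = ‖x‖² + ‖x'‖² - 2 ∑ i, x i * x' i` (and likewise for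
`y`). Each resulting summand is a product of a function of `(x, y)` and a function of `(x', y')`, so
its integral against `π ⊗ π` factors. The summands containing exactly one inner product have a
factor `∫ x i` or `∫ y j`, which vanishes by centering; what is left gives
`GWCost π = S1 μ ν + S2Cost π` (`gwCost_eq`). Fourth moments make every summand integrable, by
`a ^ i * b ^ j ≤ 1 + a ^ 4 + b ^ 4` for `i + j ≤ 4`.

Hence the two infima run over sets that are translates of each other by `S1 μ ν`. Real infima
commute with this translation because the set is nonempty (the product coupling has zero entropy)
and bounded below (`GWCost` is nonnegative).
-/

open MeasureTheory
open scoped ENNReal NNReal BigOperators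

noncomputable section

/-- The set of couplings of two measures. -/
def Couplings {E F : Type*} [MeasurableSpace E] [MeasurableSpace F]
    (μ : Measure E) (ν : Measure F) : Set (Measure (E × F)) :=
  {π | IsProbabilityMeasure π ∧ π.map Prod.fst = μ ∧ π.map Prod.snd = ν}

/-- Quadratic (2,2) GW distortion cost of a coupling. -/
def GWCost {E F : Type*} [NormedAddCommGroup E] [NormedAddCommGroup F]
    [MeasurableSpace E] [MeasurableSpace F] (π : Measure (E × F)) : ℝ :=
  ∫ p, (‖p.1.1 - p.2.1‖ ^ 2 - ‖p.1.2 - p.2.2‖ ^ 2) ^ 2 ∂(π.prod π)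

open Classical in
/-- KL divergence, with value `⊤` when it is not finite. -/
def KLD {Z : Type*} [MeasurableSpace Z] (π ρ : Measure Z) : ℝ≥0∞ :=
  if π ≪ ρ ∧ Integrable (MeasureTheory.llr π ρ) π then
    ENNReal.ofReal (∫ z, MeasureTheory.llr π ρ z ∂π) else ⊤

/-- ε-weighted entropic penalty. -/
def entTerm {Z : Type*} [MeasurableSpace Z] (ε : ℝ) (π ρ : Measure Z) : ℝ≥0∞ :=
  ENNReal.ofReal ε * KLD π ρ

/-- Entropic (2,2) Gromov–Wasserstein cost `S_ε`. -/
def SEps {E F : Type*} [NormedAddCommGroup E] [NormedAddCommGroup F]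
    [MeasurableSpace E] [MeasurableSpace F] (ε : ℝ) (μ : Measure E) (ν : Measure F) : ℝ :=
  sInf {v | ∃ π ∈ Couplings μ ν,
    entTerm ε π (μ.prod ν) ≠ ⊤ ∧ v = GWCost π + (entTerm ε π (μ.prod ν)).toReal}

/-- Squared (2,2) Gromov–Wasserstein distance `D(μ,ν)²`. -/
def GWsq {E F : Type*} [NormedAddCommGroup E] [NormedAddCommGroup F]
    [MeasurableSpace E] [MeasurableSpace F] (μ : Measure E) (ν : Measure F) : ℝ :=
  sInf {v | ∃ π ∈ Couplings μ ν, v = GWCost π}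


/-- The marginal-only part `S¹(μ,ν)` of the GW functional. -/
def S1 {E F : Type*} [NormedAddCommGroup E] [NormedAddCommGroup F]
    [MeasurableSpace E] [MeasurableSpace F] (μ : Measure E) (ν : Measure F) : ℝ :=
  (∫ p, ‖p.1 - p.2‖ ^ 4 ∂(μ.prod μ)) + (∫ p, ‖p.1 - p.2‖ ^ 4 ∂(ν.prod ν))
    - 4 * ∫ p, ‖p.1‖ ^ 2 * ‖p.2‖ ^ 2 ∂(μ.prod ν)

/-- The coupling-dependent part of the GW functional evaluated at a coupling. -/
def S2Cost {dx dy : ℕ}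
    (π : Measure (EuclideanSpace ℝ (Fin dx) × EuclideanSpace ℝ (Fin dy))) : ℝ :=
  (∫ p, -4 * (‖p.1‖ ^ 2 * ‖p.2‖ ^ 2) ∂π)
    - 8 * ∑ i : Fin dx, ∑ j : Fin dy, (∫ p, p.1 i * p.2 j ∂π) ^ 2

/-- The coupling-dependent part `S²_ε(μ,ν)` of the entropic GW functional. -/
def S2Eps {dx dy : ℕ} (ε : ℝ) (μ : Measure (EuclideanSpace ℝ (Fin dx)))
    (ν : Measure (EuclideanSpace ℝ (Fin dy))) : ℝ :=
  sInf {v | ∃ π ∈ Couplings μ ν,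
    entTerm ε π (μ.prod ν) ≠ ⊤ ∧ v = S2Cost π + (entTerm ε π (μ.prod ν)).toReal}

/-- The cost function `c_A(x,y) = −4‖x‖²‖y‖² − 32 xᵀAy`. -/
def costA {dx dy : ℕ} (A : Matrix (Fin dx) (Fin dy) ℝ)
    (x : EuclideanSpace ℝ (Fin dx)) (y : EuclideanSpace ℝ (Fin dy)) : ℝ :=
  -4 * (‖x‖ ^ 2 * ‖y‖ ^ 2) - 32 * ∑ i : Fin dx, ∑ j : Fin dy, x i * A i j * y j

/-- The optimal transport cost with cost function `c_A`. -/
def OTA {dx dy : ℕ} (A : Matrix (Fin dx) (Fin dy) ℝ)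
    (μ : Measure (EuclideanSpace ℝ (Fin dx))) (ν : Measure (EuclideanSpace ℝ (Fin dy))) : ℝ :=
  sInf {v | ∃ π ∈ Couplings μ ν, v = ∫ p, costA A p.1 p.2 ∂π}

/-- The entropic optimal transport cost with cost function `c_A` and parameter `ε`. -/
def OTAEps {dx dy : ℕ} (A : Matrix (Fin dx) (Fin dy) ℝ) (ε : ℝ)
    (μ : Measure (EuclideanSpace ℝ (Fin dx))) (ν : Measure (EuclideanSpace ℝ (Fin dy))) : ℝ :=
  sInf {v | ∃ π ∈ Couplings μ ν, entTerm ε π (μ.prod ν) ≠ ⊤ ∧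
    v = (∫ p, costA A p.1 p.2 ∂π) + (entTerm ε π (μ.prod ν)).toReal}

/-- `f` is integrable with integral `c`. -/
def HasInt {Z : Type*} [MeasurableSpace Z] (ρ : Measure Z) (f : Z → ℝ) (c : ℝ) : Prop :=
  Integrable f ρ ∧ ∫ z, f z ∂ρ = c

namespace HasInt

variable {Z : Type*} [MeasurableSpace Z] {ρ : Measure Z} {f g : Z → ℝ} {c d : ℝ}

lemma of_integrable (h : Integrable f ρ) : HasInt ρ f (∫ z, f z ∂ρ) := ⟨h, rfl⟩

lemma add (hf : HasInt ρ f c) (hg : HasInt ρ g d) : HasInt ρ (fun z => f z + g z) (c + d) :=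
  ⟨hf.1.add hg.1, by rw [integral_add hf.1 hg.1, hf.2, hg.2]⟩

lemma sub (hf : HasInt ρ f c) (hg : HasInt ρ g d) : HasInt ρ (fun z => f z - g z) (c - d) :=
  ⟨hf.1.sub hg.1, by rw [integral_sub hf.1 hg.1, hf.2, hg.2]⟩

lemma const_mul (k : ℝ) (hf : HasInt ρ f c) : HasInt ρ (fun z => k * f z) (k * c) :=
  ⟨hf.1.const_mul k, by rw [integral_const_mul, hf.2]⟩

lemma sum {ι : Type*} [Fintype ι] {f : ι → Z → ℝ} {c : ι → ℝ}
    (h : ∀ i, HasInt ρ (f i) (c i)) : HasInt ρ (fun z => ∑ i, f i z) (∑ i, c i) := by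
  refine ⟨integrable_finsetSum _ fun i _ => (h i).1, ?_⟩
  rw [integral_finsetSum _ fun i _ => (h i).1]
  exact Finset.sum_congr rfl fun i _ => (h i).2

lemma prod [SFinite ρ] (hf : HasInt ρ f c) (hg : HasInt ρ g d) :
    HasInt (ρ.prod ρ) (fun p => f p.1 * g p.2) (c * d) :=
  ⟨hf.1.mul_prod hg.1, by rw [integral_prod_mul, hf.2, hg.2]⟩

end HasInt

lemma pow_mul_pow_le_of_add_le_four {a b : ℝ} (ha : 0 ≤ a) (hb : 0 ≤ b) {i j : ℕ}
    (hij : i + j ≤ 4) : a ^ i * b ^ j ≤ 1 + a ^ 4 + b ^ 4 := by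
  set m := max 1 (max a b) with hm
  have h1 : 1 ≤ m := le_max_left _ _
  have h2 : a ≤ m := (le_max_left _ _).trans (le_max_right _ _)
  have h3 : b ≤ m := (le_max_right _ _).trans (le_max_right _ _)
  calc a ^ i * b ^ j ≤ m ^ i * m ^ j := by gcongr
    _ = m ^ (i + j) := (pow_add _ _ _).symm
    _ ≤ m ^ 4 := pow_le_pow_right₀ h1 hij
    _ ≤ 1 + a ^ 4 + b ^ 4 := by
      have ha4 : 0 ≤ a ^ 4 := by positivity
      have hb4 : 0 ≤ b ^ 4 := by positivity
      rcases max_choice 1 (max a b) with h | h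
      · rw [hm, h]; linarith
      · rcases max_choice a b with h' | h' <;> rw [hm, h, h'] <;> linarith

/-- Expansion of the distortion integrand into products of functions of `(x, y)` and of
`(x', y')`, apart from the two terms that only see one marginal. -/
lemma distortion_expand {dx dy : ℕ} (x x' : EuclideanSpace ℝ (Fin dx))
    (y y' : EuclideanSpace ℝ (Fin dy)) :
    (‖x - x'‖ ^ 2 - ‖y - y'‖ ^ 2) ^ 2 =
      ‖x - x'‖ ^ 4 + ‖y - y'‖ ^ 4 - 2 *
        ((‖x‖ ^ 2 * ‖y‖ ^ 2) * 1 + 1 * (‖x'‖ ^ 2 * ‖y'‖ ^ 2)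
          + ‖x‖ ^ 2 * ‖y'‖ ^ 2 + ‖y‖ ^ 2 * ‖x'‖ ^ 2
          - 2 * (∑ j, (‖x‖ ^ 2 * y j) * y' j)
          - 2 * (∑ j, y j * (‖x'‖ ^ 2 * y' j))
          - 2 * (∑ i, (x i * ‖y‖ ^ 2) * x' i)
          - 2 * (∑ i, x i * (x' i * ‖y'‖ ^ 2))
          + 4 * (∑ i, ∑ j, (x i * y j) * (x' i * y' j))) := by
  have hs : ∀ {d : ℕ} (u v : EuclideanSpace ℝ (Fin d)),
      ‖u - v‖ ^ 2 = ‖u‖ ^ 2 + ‖v‖ ^ 2 - 2 * ∑ i, u i * v i := by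
    intro d u v
    rw [norm_sub_sq_real, PiLp.inner_apply]
    simp only [RCLike.inner_apply, conj_trivial, mul_comm]
    ring
  have e1 : ∑ j, (‖x‖ ^ 2 * y j) * y' j = ‖x‖ ^ 2 * ∑ j, y j * y' j := by
    rw [Finset.mul_sum]; exact Finset.sum_congr rfl fun _ _ => by ring
  have e2 : ∑ j, y j * (‖x'‖ ^ 2 * y' j) = ‖x'‖ ^ 2 * ∑ j, y j * y' j := by
    rw [Finset.mul_sum]; exact Finset.sum_congr rfl fun _ _ => by ring
  have e3 : ∑ i, (x i * ‖y‖ ^ 2) * x' i = ‖y‖ ^ 2 * ∑ i, x i * x' i := by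
    rw [Finset.mul_sum]; exact Finset.sum_congr rfl fun _ _ => by ring
  have e4 : ∑ i, x i * (x' i * ‖y'‖ ^ 2) = ‖y'‖ ^ 2 * ∑ i, x i * x' i := by
    rw [Finset.mul_sum]; exact Finset.sum_congr rfl fun _ _ => by ring
  have e5 : ∑ i, ∑ j, (x i * y j) * (x' i * y' j)
      = (∑ i, x i * x' i) * ∑ j, y j * y' j := by
    rw [Finset.sum_mul_sum]
    exact Finset.sum_congr rfl fun _ _ => Finset.sum_congr rfl fun _ _ => by ring
  rw [e1, e2, e3, e4, e5]
  have h4 : ∀ r : ℝ, r ^ 4 = (r ^ 2) ^ 2 := fun r => by ring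
  rw [h4 ‖x - x'‖, h4 ‖y - y'‖, hs x x', hs y y']
  ring

/-- The pure quartic term is seen only through the marginal `ρ`, the law of `φ` under `π`. -/
lemma hasInt_quartic {Z : Type*} [MeasurableSpace Z] {d : ℕ} (π : Measure Z)
    [IsProbabilityMeasure π] (ρ : Measure (EuclideanSpace ℝ (Fin d))) [IsProbabilityMeasure ρ]
    (φ : Z → EuclideanSpace ℝ (Fin d)) (hφ : Measurable φ) (hmap : π.map φ = ρ)
    (h4 : Integrable (fun x => ‖x‖ ^ 4) ρ) :
    HasInt (π.prod π) (fun p => ‖φ p.1 - φ p.2‖ ^ 4)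
      (∫ p, ‖p.1 - p.2‖ ^ 4 ∂(ρ.prod ρ)) := by
  have hm : (π.prod π).map (Prod.map φ φ) = ρ.prod ρ := by
    rw [← Measure.map_prod_map _ _ hφ hφ, hmap]
  have hcont : Continuous fun p : EuclideanSpace ℝ (Fin d) × EuclideanSpace ℝ (Fin d) =>
      ‖p.1 - p.2‖ ^ 4 := by fun_prop
  have hint : Integrable (fun p => ‖p.1 - p.2‖ ^ 4) (ρ.prod ρ) := by
    refine Integrable.mono' (((h4.comp_fst ρ).add (h4.comp_snd ρ)).const_mul 8)
      hcont.aestronglyMeasurable (.of_forall fun p => ?_)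
    rw [Real.norm_of_nonneg (by positivity)]
    have h := pow_le_pow_left₀ (norm_nonneg _) (norm_sub_le p.1 p.2) 4
    have h' := add_pow_le (norm_nonneg p.1) (norm_nonneg p.2) 4
    norm_num at h'
    exact h.trans h'
  have hφφ : AEMeasurable (Prod.map φ φ) (π.prod π) := (hφ.prodMap hφ).aemeasurable
  rw [← hm] at hint ⊢
  refine ⟨(integrable_map_measure hcont.aestronglyMeasurable hφφ).1 hint, ?_⟩
  rw [integral_map hφφ hcont.aestronglyMeasurable]
  rfl

lemma integral_coord_eq_zero {d : ℕ} (ρ : Measure (EuclideanSpace ℝ (Fin d)))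
    (hρ : Integrable (fun x => x) ρ) (h0 : (∫ x, x ∂ρ) = 0) (i : Fin d) :
    ∫ x, x i ∂ρ = 0 := by
  have h := (EuclideanSpace.proj i : EuclideanSpace ℝ (Fin d) →L[ℝ] ℝ).integral_comp_comm hρ
  rw [h0, map_zero] at h
  exact h

/-- The decomposition holds coupling by coupling. -/
lemma gwCost_eq {dx dy : ℕ}
    (μ : Measure (EuclideanSpace ℝ (Fin dx))) (ν : Measure (EuclideanSpace ℝ (Fin dy)))
    [IsProbabilityMeasure μ] [IsProbabilityMeasure ν]
    (h4μ : Integrable (fun x => ‖x‖ ^ 4) μ) (h4ν : Integrable (fun y => ‖y‖ ^ 4) ν)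
    (hcμ : (∫ x, x ∂μ) = 0) (hcν : (∫ y, y ∂ν) = 0)
    {π : Measure (EuclideanSpace ℝ (Fin dx) × EuclideanSpace ℝ (Fin dy))}
    (hπ : π ∈ Couplings μ ν) : GWCost π = S1 μ ν + S2Cost π := by
  obtain ⟨hprob, hfst, hsnd⟩ := hπ
  have i4x : Integrable (fun p => ‖p.1‖ ^ 4) π := by
    rw [← hfst] at h4μ
    exact h4μ.comp_measurable measurable_fst
  have i4y : Integrable (fun p => ‖p.2‖ ^ 4) π := by
    rw [← hsnd] at h4ν
    exact h4ν.comp_measurable measurable_snd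
  have dom : ∀ (i j : ℕ) (_ : i + j ≤ 4)
      {F : Type} [NormedAddCommGroup F] [SecondCountableTopology F]
      (f : EuclideanSpace ℝ (Fin dx) × EuclideanSpace ℝ (Fin dy) → F) (_ : Continuous f)
      (_ : ∀ p, ‖f p‖ ≤ ‖p.1‖ ^ i * ‖p.2‖ ^ j), Integrable f π := by
    intro i j hij F _ _ f hf hb
    refine Integrable.mono' (((integrable_const (1 : ℝ)).add i4x).add i4y)
      hf.aestronglyMeasurable (.of_forall fun p => (hb p).trans ?_)
    exact pow_mul_pow_le_of_add_le_four (norm_nonneg _) (norm_nonneg _) hij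
  have cx : ∀ (p : EuclideanSpace ℝ (Fin dx) × EuclideanSpace ℝ (Fin dy)) i,
      |p.1 i| ≤ ‖p.1‖ := fun p i => PiLp.norm_apply_le p.1 i
  have cy : ∀ (p : EuclideanSpace ℝ (Fin dx) × EuclideanSpace ℝ (Fin dy)) j,
      |p.2 j| ≤ ‖p.2‖ := fun p j => PiLp.norm_apply_le p.2 j
  have hx0 : ∀ i, HasInt π (fun p => p.1 i) 0 := by
    intro i
    refine ⟨dom 1 0 (by norm_num) _ (by fun_prop) fun p => by simpa using cx p i, ?_⟩
    have hI : Integrable (fun x => x) μ := by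
      rw [← hfst]
      exact (integrable_map_measure continuous_id.aestronglyMeasurable
        measurable_fst.aemeasurable).2 (dom 1 0 (by norm_num) _ continuous_fst fun p => by simp)
    have h := integral_coord_eq_zero μ hI hcμ i
    rw [← hfst, integral_map measurable_fst.aemeasurable
      (Continuous.aestronglyMeasurable (by fun_prop))] at h
    exact h
  have hy0 : ∀ j, HasInt π (fun p => p.2 j) 0 := by
    intro j
    refine ⟨dom 0 1 (by norm_num) _ (by fun_prop) fun p => by simpa using cy p j, ?_⟩
    have hI : Integrable (fun y => y) ν := by
      rw [← hsnd]
      exact (integrable_map_measure continuous_id.aestronglyMeasurable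
        measurable_snd.aemeasurable).2 (dom 0 1 (by norm_num) _ continuous_snd fun p => by simp)
    have h := integral_coord_eq_zero ν hI hcν j
    rw [← hsnd, integral_map measurable_snd.aemeasurable
      (Continuous.aestronglyMeasurable (by fun_prop))] at h
    exact h
  have hxx : HasInt π (fun p => ‖p.1‖ ^ 2) (∫ x, ‖x‖ ^ 2 ∂μ) := by
    refine ⟨dom 2 0 (by norm_num) _ (by fun_prop) fun p => by simp, ?_⟩
    rw [← hfst, integral_map measurable_fst.aemeasurable
      (Continuous.aestronglyMeasurable (by fun_prop))]
  have hyy : HasInt π (fun p => ‖p.2‖ ^ 2) (∫ y, ‖y‖ ^ 2 ∂ν) := by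
    refine ⟨dom 0 2 (by norm_num) _ (by fun_prop) fun p => by simp, ?_⟩
    rw [← hsnd, integral_map measurable_snd.aemeasurable
      (Continuous.aestronglyMeasurable (by fun_prop))]
  have h1 : HasInt π (fun _ => (1 : ℝ)) 1 := ⟨integrable_const _, by simp⟩
  have hxy := HasInt.of_integrable (dom 2 2 (by norm_num)
    (fun p => ‖p.1‖ ^ 2 * ‖p.2‖ ^ 2) (by fun_prop) fun p => by simp)
  have hC := fun i j => HasInt.of_integrable (dom 1 1 (by norm_num)
    (fun p => p.1 i * p.2 j) (by fun_prop) fun p => by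
      rw [norm_mul, pow_one, pow_one]
      exact mul_le_mul (cx p i) (cy p j) (abs_nonneg _) (norm_nonneg _))
  have hxxy := fun j => HasInt.of_integrable (dom 2 1 (by norm_num)
    (fun p => ‖p.1‖ ^ 2 * p.2 j) (by fun_prop) fun p => by
      rw [norm_mul, pow_one, norm_pow, norm_norm]
      exact mul_le_mul_of_nonneg_left (cy p j) (by positivity))
  have hxyy := fun i => HasInt.of_integrable (dom 1 2 (by norm_num)
    (fun p => p.1 i * ‖p.2‖ ^ 2) (by fun_prop) fun p => by
      rw [norm_mul, pow_one, norm_pow, norm_norm]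
      exact mul_le_mul_of_nonneg_right (cx p i) (by positivity))
  have hX := hasInt_quartic π μ Prod.fst measurable_fst hfst h4μ
  have hY := hasInt_quartic π ν Prod.snd measurable_snd hsnd h4ν
  have key := (hX.add hY).sub (HasInt.const_mul 2
    (((((((((hxy.prod h1).add (h1.prod hxy)).add (hxx.prod hyy)).add (hyy.prod hxx)).sub
      (.const_mul 2 (.sum fun j => (hxxy j).prod (hy0 j)))).sub
      (.const_mul 2 (.sum fun j => (hy0 j).prod (hxxy j)))).sub
      (.const_mul 2 (.sum fun i => (hxyy i).prod (hx0 i)))).sub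
      (.const_mul 2 (.sum fun i => (hx0 i).prod (hxyy i)))).add
      (.const_mul 4 (.sum fun i => .sum fun j => (hC i j).prod (hC i j)))))
  simp only [GWCost, distortion_expand]
  rw [key.2, S1, S2Cost, integral_prod_mul (fun x => ‖x‖ ^ 2) (fun y => ‖y‖ ^ 2),
    integral_const_mul]
  simp only [mul_zero, zero_mul, Finset.sum_const_zero, pow_two (∫ p, _ * _ ∂π)]
  ring

lemma prod_mem_couplings {E F : Type*} [MeasurableSpace E] [MeasurableSpace F]
    (μ : Measure E) (ν : Measure F) [IsProbabilityMeasure μ] [IsProbabilityMeasure ν] :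
    μ.prod ν ∈ Couplings μ ν :=
  ⟨inferInstance, by simp, by simp⟩

lemma entTerm_self_ne_top {Z : Type*} [MeasurableSpace Z] (ε : ℝ) (π : Measure Z)
    [IsProbabilityMeasure π] : entTerm ε π π ≠ ⊤ := by
  have h : π ≪ π ∧ Integrable (llr π π) π :=
    ⟨Measure.AbsolutelyContinuous.rfl, (integrable_zero _ _ _).congr (llr_self π).symm⟩
  rw [entTerm, KLD, if_pos h]
  exact ENNReal.mul_ne_top ENNReal.ofReal_ne_top ENNReal.ofReal_ne_top

/-- At `ε = 0` the penalty vanishes even on couplings of infinite entropy, as `0 * ⊤ = 0`. -/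
lemma entTerm_zero {Z : Type*} [MeasurableSpace Z] (π ρ : Measure Z) : entTerm 0 π ρ = 0 := by
  simp [entTerm]

/-- **Decomposition of the entropic GW cost for centered marginals:**
`S_ε(μ,ν) = S¹(μ,ν) + S²_ε(μ,ν)` for every `ε ≥ 0`; in particular
`D(μ,ν)² = S¹(μ,ν) + S²(μ,ν)` (with `S² = S²_0`). -/
theorem egw_decomposition (dx dy : ℕ)
    (μ : Measure (EuclideanSpace ℝ (Fin dx))) (ν : Measure (EuclideanSpace ℝ (Fin dy)))
    [IsProbabilityMeasure μ] [IsProbabilityMeasure ν]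
    (h4μ : Integrable (fun x => ‖x‖ ^ 4) μ) (h4ν : Integrable (fun y => ‖y‖ ^ 4) ν)
    (hcμ : (∫ x, x ∂μ) = 0) (hcν : (∫ y, y ∂ν) = 0) :
    (∀ ε : ℝ, 0 ≤ ε → SEps ε μ ν = S1 μ ν + S2Eps ε μ ν) ∧
    GWsq μ ν = S1 μ ν + S2Eps 0 μ ν := by
  have main : ∀ ε : ℝ, SEps ε μ ν = S1 μ ν + S2Eps ε μ ν := by
    intro ε
    set T := {v | ∃ π ∈ Couplings μ ν,
      entTerm ε π (μ.prod ν) ≠ ⊤ ∧ v = S2Cost π + (entTerm ε π (μ.prod ν)).toReal} with hT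
    have hne : T.Nonempty :=
      ⟨_, μ.prod ν, prod_mem_couplings μ ν, entTerm_self_ne_top ε _, rfl⟩
    have hbd : BddBelow T := by
      refine ⟨-S1 μ ν, ?_⟩
      rintro v ⟨π, hπ, -, rfl⟩
      have h0 : 0 ≤ GWCost π := integral_nonneg fun p => sq_nonneg _
      have h1 := gwCost_eq μ ν h4μ h4ν hcμ hcν hπ
      have h2 : 0 ≤ (entTerm ε π (μ.prod ν)).toReal := ENNReal.toReal_nonneg
      linarith
    have hset : {v | ∃ π ∈ Couplings μ ν, entTerm ε π (μ.prod ν) ≠ ⊤ ∧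
        v = GWCost π + (entTerm ε π (μ.prod ν)).toReal} = OrderIso.addLeft (S1 μ ν) '' T := by
      ext v
      constructor
      · rintro ⟨π, hπ, hfin, rfl⟩
        refine ⟨_, ⟨π, hπ, hfin, rfl⟩, ?_⟩
        rw [gwCost_eq μ ν h4μ h4ν hcμ hcν hπ, OrderIso.addLeft_apply, add_assoc]
      · rintro ⟨_, ⟨π, hπ, hfin, rfl⟩, rfl⟩
        refine ⟨π, hπ, hfin, ?_⟩
        rw [gwCost_eq μ ν h4μ h4ν hcμ hcν hπ, OrderIso.addLeft_apply, add_assoc]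
    rw [SEps, hset, ← OrderIso.map_csInf' _ hne hbd, OrderIso.addLeft_apply, S2Eps]
  refine ⟨fun ε _ => main ε, ?_⟩
  rw [← main 0, GWsq, SEps]
  simp [entTerm_zero]
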